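/- arXiv:math/0610887 — 2 statements merged into one kernel-verified Lean document; each statement's English description precedes it below -/
import Mathlib

section
/- Let k ≥ 1 be an integer and x > 0 a real number. Let A be the (k+1)×(k+1) real matrix with rows and columns indexed by 0, 1, …, k, whose (0,0) entry is 1/(3x) and whose (i,j) entry is 1/(i+j+2) for all (i,j) ≠ (0,0). Then det A = (∏_{m=1}^{k−1} m!)² · (∏_{m=4}^{k+2} Γ(m)) / (∏_{m=k+4}^{2k+3} Γ(m)) · [ ((2 − 3x)/(6x)) · Γ(k+3) + 2(k!)²/Γ(k+3) ], where Γ denotes the Gamma function (so Γ(m) = (m−1)! for positive integers m). Consequently, det A ≥ 0 if and only if 0 < x ≤ 2(k+1)²(k+2)² / (3k(k+3)(k²+3k+4)). -/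
open Finset

noncomputable section

/-- The matrix `A`: its `(0,0)` entry is `1/(3x)` and its `(i,j)` entry is
`1/(i+j+2)` for `(i,j) ≠ (0,0)`. -/
def matA (k : ℕ) (x : ℝ) : Matrix (Fin (k + 1)) (Fin (k + 1)) ℝ :=
  Matrix.of fun i j =>
    if i = 0 ∧ j = 0 then 1 / (3 * x) else 1 / ((i : ℝ) + (j : ℝ) + 2)

def hil (d n : ℕ) : Matrix (Fin n) (Fin n) ℝ :=
  Matrix.of fun i j => 1 / ((i : ℝ) + (j : ℝ) + d + 1)

lemma hil_rec (d n : ℕ) : (hil d (n + 1)).det =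
    1 / ((d : ℝ) + 1) * (∏ i : Fin n, (((i : ℕ) : ℝ) + 1) / ((i : ℕ) + d + 2)) ^ 2 *
      (hil (d + 2) n).det := by
  have h1 : (hil d (n + 1)).det = (Matrix.of fun (i j : Fin (n + 1)) =>
      if i = 0 then hil d (n + 1) 0 j else
        hil d (n + 1) i j - (((d : ℝ) + 1) / ((i : ℕ) + d + 1)) * hil d (n + 1) 0 j).det := by
    refine Matrix.det_eq_of_forall_row_eq_smul_add_const
      (fun i => if i = 0 then 0 else ((d : ℝ) + 1) / ((i : ℕ) + d + 1)) 0 (by simp) ?_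
    intro i j
    by_cases hi : i = 0 <;> simp [hi]
  rw [h1, Matrix.det_succ_column_zero, Fin.sum_univ_succ, Finset.sum_eq_zero, add_zero]
  · have h2 : ((Matrix.of fun (i j : Fin (n + 1)) =>
      if i = 0 then hil d (n + 1) 0 j else
        hil d (n + 1) i j - (((d : ℝ) + 1) / ((i : ℕ) + d + 1)) * hil d (n + 1) 0 j).submatrix
          (Fin.succAbove 0) Fin.succ) =
        Matrix.of fun i j : Fin n => (((i : ℕ) : ℝ) + 1) / ((i : ℕ) + d + 2) *
          (Matrix.of (fun i j : Fin n => (((j : ℕ) : ℝ) + 1) / ((j : ℕ) + d + 2) *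
            hil (d + 2) n i j)) i j := by
      ext i j
      simp only [Matrix.submatrix_apply, Matrix.of_apply, hil, Fin.succAbove_zero,
        Fin.succ_ne_zero, if_false, Fin.val_succ, Fin.val_zero]
      push_cast
      have a1 : ((i : ℕ) : ℝ) + 1 + ((j : ℕ) + 1) + d + 1 ≠ 0 := by positivity
      have a2 : ((i : ℕ) : ℝ) + 1 + d + 1 ≠ 0 := by positivity
      have a3 : (0 : ℝ) + (((j : ℕ) : ℝ) + 1) + d + 1 ≠ 0 := by positivity
      have a4 : ((i : ℕ) : ℝ) + d + 2 ≠ 0 := by positivity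
      have a5 : ((j : ℕ) : ℝ) + d + 2 ≠ 0 := by positivity
      have a6 : ((i : ℕ) : ℝ) + (j : ℕ) + (d + 2) + 1 ≠ 0 := by positivity
      have e1 : ((i : ℕ) : ℝ) + 1 + ((j : ℕ) + 1) + d + 1 =
        ((i : ℕ) : ℝ) + (j : ℕ) + (d + 2) + 1 := by ring
      have e2 : ((i : ℕ) : ℝ) + 1 + d + 1 = ((i : ℕ) : ℝ) + d + 2 := by ring
      have e3 : (0 : ℝ) + (((j : ℕ) : ℝ) + 1) + d + 1 = ((j : ℕ) : ℝ) + d + 2 := by ring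
      rw [e1, e2, e3]
      field_simp
      ring
    rw [h2, Matrix.det_mul_column, Matrix.det_mul_row]
    simp [hil]
    ring
  · intro i _
    have : ((i : ℕ) : ℝ) + 1 + d + 1 ≠ 0 := by positivity
    have h' : (d : ℝ) + 1 ≠ 0 := by positivity
    simp [hil, Fin.succ_ne_zero]
    left
    field_simp
    ring

lemma prod_eq (d n : ℕ) : (∏ i : Fin n, (((i : ℕ) : ℝ) + 1) / ((i : ℕ) + d + 2)) =
    (n.factorial : ℝ) * (d + 1).factorial / (d + n + 1).factorial := by
  rw [Fin.prod_univ_eq_prod_range (fun i : ℕ => ((i : ℝ) + 1) / ((i : ℝ) + d + 2)) n]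
  induction n with
  | zero => simp [Nat.factorial_ne_zero]
  | succ n ih =>
    have e : (d + (n + 1) + 1).factorial = (n + d + 2) * (d + n + 1).factorial := by
      rw [show d + (n + 1) + 1 = (d + n + 1) + 1 by ring, Nat.factorial_succ]; ring
    have h := Nat.factorial_ne_zero (d + n + 1)
    rw [Finset.prod_range_succ, ih, e, Nat.factorial_succ n]
    have h1 : ((n : ℝ)) + d + 2 ≠ 0 := by positivity
    push_cast
    field_simp

lemma hil_det (n : ℕ) : ∀ d : ℕ, (hil d n).det =
    (∏ m ∈ range n, (m.factorial : ℝ)) ^ 2 * (∏ m ∈ range n, ((d + m).factorial : ℝ)) /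
      ∏ m ∈ range n, ((d + n + m).factorial : ℝ) := by
  induction n with
  | zero => intro d; simp
  | succ n ih =>
    intro d
    rw [hil_rec, ih, prod_eq, prod_range_succ (fun m => (m.factorial : ℝ))]
    have e1 : (∏ m ∈ range (n + 1), ((d + m).factorial : ℝ)) * (d + n + 1).factorial =
        d.factorial * (d + 1).factorial * ∏ m ∈ range n, ((d + 2 + m).factorial : ℝ) := by
      rw [show d + n + 1 = d + (n + 1) by ring,
        ← prod_range_succ (fun m => ((d + m).factorial : ℝ)), prod_range_succ', prod_range_succ']
      rw [prod_congr rfl (g := fun m => ((d + 2 + m).factorial : ℝ))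
        (fun m _ => by rw [show d + (m + 1 + 1) = d + 2 + m by ring])]
      simp only [add_zero, zero_add]; ring
    have e2 : (∏ m ∈ range (n + 1), ((d + (n + 1) + m).factorial : ℝ)) =
        (d + n + 1).factorial * ∏ m ∈ range n, ((d + 2 + n + m).factorial : ℝ) := by
      rw [prod_range_succ']
      rw [prod_congr rfl (g := fun m => ((d + 2 + n + m).factorial : ℝ))
        (fun m _ => by rw [show d + (n + 1) + (m + 1) = d + 2 + n + m by ring])]
      simp only [add_zero, ← add_assoc]; ring
    have p : ∀ a : ℕ, (a.factorial : ℝ) ≠ 0 := fun a => by exact_mod_cast a.factorial_ne_zero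
    have q : (∏ m ∈ range n, ((d + 2 + n + m).factorial : ℝ)) ≠ 0 :=
      prod_ne_zero_iff.2 fun _ _ => p _
    rw [← eq_div_iff (p _)] at e1
    rw [e1, e2, Nat.factorial_succ d]
    have := p (d + n + 1)
    have h' : (d : ℝ) + 1 ≠ 0 := by positivity
    push_cast
    field_simp

lemma matA_det (k : ℕ) (x : ℝ) : (matA k x).det =
    (hil 1 (k + 1)).det + (1 / (3 * x) - 1 / 2) * (hil 3 k).det := by
  rw [Matrix.det_succ_row_zero, Matrix.det_succ_row_zero, Fin.sum_univ_succ, Fin.sum_univ_succ]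
  have h0 : (matA k x).submatrix Fin.succ (Fin.succAbove 0) = hil 3 k := by
    ext i j
    simp [matA, hil, Fin.succ_ne_zero]
    ring
  have h1 : (hil 1 (k + 1)).submatrix Fin.succ (Fin.succAbove 0) = hil 3 k := by
    ext i j
    simp [hil]
    ring
  have h2 : ∀ j : Fin k, (matA k x).submatrix Fin.succ (Fin.succAbove j.succ) =
      (hil 1 (k + 1)).submatrix Fin.succ (Fin.succAbove j.succ) := by
    intro j
    ext a b
    simp [matA, hil, Fin.succ_ne_zero]
    ring
  have h3 : ∀ j : Fin k, matA k x 0 j.succ = hil 1 (k + 1) 0 j.succ := by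
    intro j
    simp [matA, hil, Fin.succ_ne_zero]
    ring
  simp only [h0, h1, h2, h3]
  have h4 : matA k x 0 0 = 1 / (3 * x) := by simp [matA]
  have h5 : hil 1 (k + 1) 0 0 = 1 / 2 := by simp [hil]; norm_num
  rw [h4, h5]
  simp only [Fin.val_zero, pow_zero, one_mul]
  ring

lemma hil3 (k : ℕ) (hk : 1 ≤ k) : (hil 3 k).det =
    (∏ m ∈ Icc 1 (k - 1), (m.factorial : ℝ)) ^ 2 *
        (∏ m ∈ Icc 4 (k + 2), Real.Gamma (m : ℝ)) /
        (∏ m ∈ Icc (k + 4) (2 * k + 3), Real.Gamma (m : ℝ)) * (k + 2).factorial := by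
  obtain ⟨n, rfl⟩ : ∃ n, k = n + 1 := ⟨k - 1, by omega⟩
  have g : ∀ m : ℕ, Real.Gamma ((m + 1 : ℕ) : ℝ) = m.factorial := by
    intro m; push_cast; exact Real.Gamma_nat_eq_factorial m
  have a1 : ∏ m ∈ Icc 1 (n + 1 - 1), (m.factorial : ℝ) =
      ∏ m ∈ range (n + 1), (m.factorial : ℝ) := by
    rw [prod_range_succ', ← Finset.Ico_succ_right_eq_Icc, prod_Ico_eq_prod_range]
    simp [add_comm]
  have a2 : ∏ m ∈ Icc 4 (n + 1 + 2), Real.Gamma (m : ℝ) =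
      ∏ m ∈ range n, ((3 + m).factorial : ℝ) := by
    rw [← Finset.Ico_succ_right_eq_Icc, prod_Ico_eq_prod_range]
    refine prod_congr (by congr 1) fun m _ => ?_
    rw [← g]; congr 2; omega
  have a3 : ∏ m ∈ Icc (n + 1 + 4) (2 * (n + 1) + 3), Real.Gamma (m : ℝ) =
      ∏ m ∈ range (n + 1), ((3 + (n + 1) + m).factorial : ℝ) := by
    rw [← Finset.Ico_succ_right_eq_Icc, prod_Ico_eq_prod_range]
    refine prod_congr (by congr 1; simp; omega) fun m _ => ?_
    rw [← g]; congr 2; omega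
  rw [hil_det, a1, a2, a3, prod_range_succ (fun m => ((3 + m).factorial : ℝ)),
    show n + 1 + 2 = 3 + n by ring]
  ring

/-- The determinant formula for `A`, and the consequent positivity criterion. -/
theorem det_matA (k : ℕ) (hk : 1 ≤ k) (x : ℝ) (hx : 0 < x) :
    (matA k x).det =
      (∏ m ∈ Icc 1 (k - 1), (m.factorial : ℝ)) ^ 2 *
        (∏ m ∈ Icc 4 (k + 2), Real.Gamma (m : ℝ)) /
        (∏ m ∈ Icc (k + 4) (2 * k + 3), Real.Gamma (m : ℝ)) *
        ((2 - 3 * x) / (6 * x) * Real.Gamma ((k : ℝ) + 3) +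
          2 * ((k.factorial : ℝ)) ^ 2 / Real.Gamma ((k : ℝ) + 3)) ∧
    (0 ≤ (matA k x).det ↔
      (0 < x ∧ x ≤ 2 * ((k : ℝ) + 1) ^ 2 * ((k : ℝ) + 2) ^ 2 /
        (3 * (k : ℝ) * ((k : ℝ) + 3) * ((k : ℝ) ^ 2 + 3 * (k : ℝ) + 4)))) := by

  have p : ∀ a : ℕ, (0 : ℝ) < a.factorial := fun a => by exact_mod_cast a.factorial_pos
  have hG : Real.Gamma ((k : ℝ) + 3) = (k + 2).factorial := by
    rw [← Real.Gamma_nat_eq_factorial]; congr 1; push_cast; ring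
  have e1 : (matA k x).det = (hil 3 k).det / (k + 2).factorial *
      ((2 - 3 * x) / (6 * x) * (k + 2).factorial +
          2 * ((k.factorial : ℝ)) ^ 2 / (k + 2).factorial) := by
    rw [matA_det, hil_rec, prod_eq, show 1 + k + 1 = k + 2 by ring]
    have := (p (k + 2)).ne'
    simp only [show (1 + 1 : ℕ).factorial = 2 from rfl, show 1 + 2 = 3 from rfl]
    push_cast
    field_simp
    ring
  have hpos : 0 < (hil 3 k).det := by
    rw [hil_det]
    have := prod_pos (fun (m : ℕ) (_ : m ∈ range k) => p m)
    have := prod_pos (fun (m : ℕ) (_ : m ∈ range k) => p (3 + m))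
    have := prod_pos (fun (m : ℕ) (_ : m ∈ range k) => p (3 + k + m))
    positivity
  refine ⟨?_, ?_⟩
  · rw [e1, hG, hil3 k hk, mul_div_assoc, div_self (p _).ne', mul_one]
  · have hk' : (0 : ℝ) < k := by exact_mod_cast hk
    have e2 : (matA k x).det = (hil 3 k).det / (6 * x * (((k : ℝ) + 1) ^ 2 * (k + 2) ^ 2)) *
        (2 * ((k : ℝ) + 1) ^ 2 * ((k : ℝ) + 2) ^ 2 -
          x * (3 * (k : ℝ) * ((k : ℝ) + 3) * ((k : ℝ) ^ 2 + 3 * (k : ℝ) + 4))) := by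
      have := (p k).ne'
      rw [e1, Nat.factorial_succ, Nat.factorial_succ]
      push_cast
      rw [show (k : ℝ) + 1 + 1 = k + 2 by ring]
      have h1 : (k : ℝ) + 1 ≠ 0 := by positivity
      have h2 : (k : ℝ) + 2 ≠ 0 := by positivity
      field_simp
      ring
    rw [e2, mul_nonneg_iff_of_pos_left (by positivity), sub_nonneg, le_div_iff₀ (by positivity)]
    exact ⟨fun h => ⟨hx, h⟩, fun h => h.2⟩
end
end

section
/- For x > 0, let α(x) be the weight sequence α_0 := √x and α_n := √((n+2)/(n+3)) for n ≥ 1, with moments γ_0 := 1 and γ_m := α_0² ⋯ α_{m−1}² for m ≥ 1 (so that γ_m = 3x/(m+2) for m ≥ 1). Then for every integer k ≥ 1, the (k+1)×(k+1) real Hankel matrix whose (i,j) entry is γ_{i+j} (0 ≤ i, j ≤ k) is positive semidefinite if and only if 0 < x ≤ 2(k+1)²(k+2)² / (3k(k+3)(k²+3k+4)). -/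
open Finset Matrix

noncomputable section

/-- The weight sequence: `α₀ = √x`, `α_n = √((n+2)/(n+3))` for `n ≥ 1`. -/
def alphaX (x : ℝ) : ℕ → ℝ := fun n =>
  if n = 0 then Real.sqrt x else Real.sqrt (((n : ℝ) + 2) / ((n : ℝ) + 3))

/-- The moments `γ_0 = 1`, `γ_m = α₀² ⋯ α_{m−1}²`. -/
def momentX (x : ℝ) (m : ℕ) : ℝ := ∏ j ∈ range m, (alphaX x j) ^ 2

lemma momentX_eq (x : ℝ) (hx : 0 < x) (m : ℕ) :
    momentX x m = 3 * x * (1 / ((m : ℝ) + 2)) + if m = 0 then 1 - 3 * x / 2 else 0 := by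
  have h : ∀ n : ℕ, momentX x (n + 1) = 3 * x / ((n : ℝ) + 3) := by
    intro n
    induction n with
    | zero => simp [momentX, alphaX, Real.sq_sqrt hx.le]
    | succ n ih =>
      have h1 : momentX x (n + 1 + 1) = momentX x (n + 1) * (alphaX x (n + 1)) ^ 2 := by
        unfold momentX; rw [prod_range_succ]
      rw [h1, ih]
      unfold alphaX
      rw [if_neg (Nat.succ_ne_zero n), Real.sq_sqrt (by positivity)]
      push_cast
      field_simp
      ring
  rcases m with _ | n
  · simp [momentX]; ring
  · rw [h n]; simp; field_simp; ring

/-- the bilinear form -/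
def BX (k : ℕ) (y z : Fin (k + 1) → ℝ) : ℝ :=
  ∑ i, ∑ j, y i * z j * (1 / ((i.1 : ℝ) + (j.1 : ℝ) + 2))

lemma BX_nonneg (k : ℕ) (y : Fin (k + 1) → ℝ) : 0 ≤ BX k y y := by
  have h : BX k y y = ∫ t in (0:ℝ)..1, t * (∑ i, y i * t ^ (i.1)) ^ 2 := by
    have h1 : ∀ t : ℝ, t * (∑ i, y i * t ^ (i.1)) ^ 2 =
        ∑ i, ∑ j, y i * y j * t ^ (i.1 + j.1 + 1) := by
      intro t
      rw [sq, Finset.sum_mul_sum, Finset.mul_sum]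
      refine Finset.sum_congr rfl fun i _ => ?_
      rw [Finset.mul_sum]
      refine Finset.sum_congr rfl fun j _ => ?_
      ring
    simp_rw [h1]
    rw [intervalIntegral.integral_finsetSum]
    · refine Finset.sum_congr rfl fun i _ => ?_
      rw [intervalIntegral.integral_finsetSum]
      · refine Finset.sum_congr rfl fun j _ => ?_
        rw [intervalIntegral.integral_const_mul, integral_pow]
        push_cast
        simp
        left
        ring
      · intro j _
        exact Continuous.intervalIntegrable (by fun_prop) _ _
    · intro j _
      exact Continuous.intervalIntegrable (by fun_prop) _ _
  rw [h]
  apply intervalIntegral.integral_nonneg (by norm_num)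
  intro t ht
  exact mul_nonneg ht.1 (sq_nonneg _)

lemma form_eq (x : ℝ) (hx : 0 < x) (k : ℕ) (y : Fin (k + 1) → ℝ) :
    y ⬝ᵥ ((Matrix.of fun i j : Fin (k + 1) => momentX x (i.1 + j.1)) *ᵥ y) =
      3 * x * BX k y y + (1 - 3 * x / 2) * y 0 ^ 2 := by
  have h2 : (1 - 3 * x / 2) * y 0 ^ 2 = ∑ i : Fin (k+1), ∑ j : Fin (k+1),
      y i * y j * (if i.1 + j.1 = 0 then 1 - 3 * x / 2 else 0) := by
    rw [Fintype.sum_eq_single 0, Fintype.sum_eq_single 0]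
    · simp; ring
    · intro j hj
      have : j.1 ≠ 0 := fun h => hj (Fin.ext h)
      simp [this]
    · intro i hi
      have : i.1 ≠ 0 := fun h => hi (Fin.ext h)
      simp [this]
  rw [h2, BX, Finset.mul_sum, ← Finset.sum_add_distrib]
  simp only [dotProduct, mulVec, Matrix.of_apply]
  refine Finset.sum_congr rfl fun i _ => ?_
  rw [Finset.mul_sum, Finset.mul_sum, ← Finset.sum_add_distrib]
  refine Finset.sum_congr rfl fun j _ => ?_
  rw [momentX_eq x hx]
  push_cast
  ring

lemma prodA (k : ℕ) : ∏ i ∈ range (k+1), ((i:ℝ) + 2) = ((k:ℝ)+1) * (k+2) * ∏ i ∈ range k, ((i:ℝ)+1) := by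
  induction k with
  | zero => simp
  | succ n ih => rw [prod_range_succ, ih, prod_range_succ _ n]; push_cast; ring

lemma prodB (k : ℕ) : 2 * ∏ i ∈ range k, ((i:ℝ) + 3) = ((k:ℝ)+1) * (k+2) * ∏ i ∈ range k, ((i:ℝ)+1) := by
  induction k with
  | zero => simp
  | succ n ih => rw [prod_range_succ, ← mul_assoc, ih, prod_range_succ _ n]; push_cast; ring

lemma exists_c (k : ℕ) : ∃ c : Fin (k + 1) → ℝ,
    (∀ i : Fin (k + 1), ∑ j, c j * (1 / ((i.1 : ℝ) + (j.1 : ℝ) + 2)) = if i = 0 then 1 else 0) ∧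
    c 0 = ((k : ℝ) + 1) ^ 2 * ((k : ℝ) + 2) ^ 2 / 2 := by
  classical
  set v : ℕ → ℝ := fun j => -((j : ℝ) + 2) with hv
  set N : Polynomial ℝ := ∏ m ∈ range k, (Polynomial.X - Polynomial.C ((m : ℝ) + 1)) with hN
  have hNe : ∀ s, N.eval s = ∏ m ∈ range k, (s - ((m : ℝ) + 1)) := by
    intro s; simp [hN, Polynomial.eval_prod]
  have hinj : Set.InjOn v (range (k+1)) := by
    intro a _ b _ h
    simp only [hv] at h
    have : (a : ℝ) = b := by linarith
    exact_mod_cast this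
  have hdeg : N.degree < ((range (k+1)).card : WithBot ℕ) := by
    rw [hN, Polynomial.degree_prod]
    simp only [Polynomial.degree_X_sub_C]
    simp
    exact_mod_cast Nat.lt_succ_self k
  have hint := Lagrange.eq_interpolate hinj hdeg
  have key : ∀ i : ℕ, N.eval (i : ℝ) = (Lagrange.nodal (range (k+1)) v).eval (i : ℝ) *
      ∑ j ∈ range (k+1), Lagrange.nodalWeight (range (k+1)) v j * ((i : ℝ) - v j)⁻¹ * N.eval (v j) := by
    intro i
    have hne : ∀ j ∈ range (k+1), (i : ℝ) ≠ v j := by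
      intro j _ h
      simp only [hv] at h
      have : (0:ℝ) ≤ (i:ℝ) + j := by positivity
      linarith
    have := Lagrange.eval_interpolate_not_at_node (fun j => N.eval (v j)) hne
    rw [← this]
    exact congrArg _ hint
  have hnod : ∀ i : ℕ, 0 < (Lagrange.nodal (range (k+1)) v).eval (i : ℝ) := by
    intro i
    rw [Lagrange.eval_nodal]
    apply prod_pos
    intro j _
    simp only [hv]
    have : (0:ℝ) ≤ (i:ℝ) + j := by positivity
    linarith
  have hN0 : N.eval (0:ℝ) = (-1)^k * ∏ i ∈ range k, ((i:ℝ)+1) := by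
    rw [hNe]; simp only [zero_sub]; rw [prod_neg]; simp
  have hP : (0:ℝ) < ∏ i ∈ range k, ((i:ℝ)+1) := prod_pos fun i _ => by positivity
  have hN0' : N.eval (0:ℝ) ≠ 0 := by rw [hN0]; positivity
  set A : ℝ := (Lagrange.nodal (range (k+1)) v).eval 0 / N.eval 0 with hA
  refine ⟨fun j => A * (Lagrange.nodalWeight (range (k+1)) v j.1 * N.eval (v j.1)), ?_, ?_⟩
  · intro i
    rw [Fin.sum_univ_eq_sum_range (fun j => A * (Lagrange.nodalWeight (range (k+1)) v j * N.eval (v j)) * (1 / ((i.1 : ℝ) + (j : ℝ) + 2)))]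
    have e : ∑ j ∈ range (k+1), A * (Lagrange.nodalWeight (range (k+1)) v j * N.eval (v j)) * (1 / ((i.1 : ℝ) + (j : ℝ) + 2))
        = A * (N.eval (i.1 : ℝ) / (Lagrange.nodal (range (k+1)) v).eval (i.1 : ℝ)) := by
      rw [key i.1, mul_div_cancel_left₀ _ (hnod i.1).ne', Finset.mul_sum]
      refine Finset.sum_congr rfl fun j _ => ?_
      have : (i.1 : ℝ) - v j = (i.1 : ℝ) + (j : ℝ) + 2 := by simp only [hv]; ring
      rw [this, one_div]; ring
    rw [e]
    split_ifs with h
    · subst h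
      have := hnod 0
      simp only [Nat.cast_zero] at this
      simp only [Fin.val_zero, Nat.cast_zero, hA]
      field_simp
    · have h0 : i.1 ≠ 0 := fun h' => h (Fin.ext h')
      have : N.eval (i.1 : ℝ) = 0 := by
        rw [hNe]
        apply prod_eq_zero (i := i.1 - 1)
        · have := i.2
          simp; omega
        · rw [Nat.cast_sub (by omega)]; simp
      rw [this]; simp
  · have h1 : (Lagrange.nodal (range (k+1)) v).eval 0 = ∏ i ∈ range (k+1), ((i:ℝ) + 2) := by
      rw [Lagrange.eval_nodal]; simp [hv]
    have h2 : N.eval (v 0) = (-1)^k * ∏ i ∈ range k, ((i:ℝ)+3) := by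
      rw [hNe]
      have : ∀ m : ℕ, v 0 - ((m:ℝ)+1) = -((m:ℝ)+3) := by intro m; simp [hv]; ring
      simp only [this]; rw [prod_neg]; simp
    have h3 : Lagrange.nodalWeight (range (k+1)) v 0 = (∏ i ∈ range k, ((i:ℝ)+1))⁻¹ := by
      rw [Lagrange.nodalWeight, ← prod_inv_distrib]
      have : (range (k+1)).erase 0 = (range k).image (· + 1) := by
        ext a; simp; constructor
        · rintro ⟨h, h'⟩; exact ⟨a - 1, by omega, by omega⟩
        · rintro ⟨b, h, h'⟩; omega
      rw [this, prod_image (by intro a _ b _ h; simpa using h)]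
      refine prod_congr rfl fun i _ => ?_
      simp [hv]
    simp only [Fin.val_zero]
    rw [hA, h1, h2, h3, hN0, prodA]
    have hB := prodB k
    have hB' : ∏ i ∈ range k, ((i:ℝ)+3) = ((k:ℝ)+1) * (k+2) * (∏ i ∈ range k, ((i:ℝ)+1)) / 2 := by linarith
    rw [hB']
    field_simp

/-- The `(k+1)×(k+1)` Hankel moment matrix `(γ_{i+j})_{0 ≤ i,j ≤ k}` is positive
semidefinite iff `0 < x ≤ 2(k+1)²(k+2)²/(3k(k+3)(k²+3k+4))`. -/
theorem hankel_posSemidef_iff (x : ℝ) (hx : 0 < x) (k : ℕ) (hk : 1 ≤ k) :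
    (∀ y : Fin (k + 1) → ℝ,
        0 ≤ y ⬝ᵥ ((Matrix.of fun i j : Fin (k + 1) => momentX x (i.1 + j.1)) *ᵥ y)) ↔
      (0 < x ∧ x ≤ 2 * ((k : ℝ) + 1) ^ 2 * ((k : ℝ) + 2) ^ 2 /
        (3 * (k : ℝ) * ((k : ℝ) + 3) * ((k : ℝ) ^ 2 + 3 * (k : ℝ) + 4))) := by
  obtain ⟨c, hc, hc0⟩ := exists_c k
  have hk0 : (0:ℝ) < k := by exact_mod_cast hk
  have hK : 0 < c 0 := by rw [hc0]; positivity
  have hBc : ∀ y, BX k y c = y 0 := by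
    intro y
    have : BX k y c = ∑ i, y i * (if i = 0 then 1 else 0) := by
      refine Finset.sum_congr rfl fun i _ => ?_
      rw [← hc i, Finset.mul_sum]
      refine Finset.sum_congr rfl fun j _ => ?_
      ring
    rw [this]; simp
  have hexp : ∀ (y : Fin (k+1) → ℝ) (s : ℝ), BX k (fun i => y i - s * c i) (fun i => y i - s * c i) =
      BX k y y - 2 * s * y 0 + s ^ 2 * c 0 := by
    intro y s
    have hsymm : BX k c y = y 0 := by
      rw [← hBc y, BX, BX, Finset.sum_comm]
      refine Finset.sum_congr rfl fun i _ => Finset.sum_congr rfl fun j _ => ?_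
      rw [add_comm (j.1 : ℝ)]; ring
    have : BX k (fun i => y i - s * c i) (fun i => y i - s * c i) =
      BX k y y - s * BX k y c - s * BX k c y + s ^ 2 * BX k c c := by
      simp only [BX, Finset.mul_sum, ← Finset.sum_add_distrib, ← Finset.sum_sub_distrib]
      refine Finset.sum_congr rfl fun i _ => Finset.sum_congr rfl fun j _ => ?_
      ring
    rw [this, hsymm, hBc, hBc]; ring
  have hiff : x ≤ 2 * ((k : ℝ) + 1) ^ 2 * ((k : ℝ) + 2) ^ 2 /
        (3 * (k : ℝ) * ((k : ℝ) + 3) * ((k : ℝ) ^ 2 + 3 * (k : ℝ) + 4)) ↔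
        0 ≤ 3 * x + (1 - 3 * x / 2) * c 0 := by
    rw [le_div_iff₀ (by positivity), hc0]
    constructor <;> intro h <;> nlinarith [h]
  simp only [form_eq x hx]
  constructor
  · intro h
    refine ⟨hx, hiff.2 ?_⟩
    have := h c
    rw [hBc] at this
    have h' : 0 ≤ (3 * x + (1 - 3 * x / 2) * c 0) * c 0 := by nlinarith [this]
    exact nonneg_of_mul_nonneg_left h' hK
  · rintro ⟨_, h⟩ y
    have h1 := hiff.1 h
    have h2 := BX_nonneg k (fun i => y i - (y 0 / c 0) * c i)
    rw [hexp] at h2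
    have h3 : y 0 ^ 2 / c 0 ≤ BX k y y := by
      have : BX k y y - 2 * (y 0 / c 0) * y 0 + (y 0 / c 0) ^ 2 * c 0 = BX k y y - y 0 ^ 2 / c 0 := by
        field_simp; ring
      linarith
    have h4 : 3 * x * (y 0 ^ 2 / c 0) + (1 - 3 * x / 2) * y 0 ^ 2 =
        (3 * x + (1 - 3 * x / 2) * c 0) * (y 0 ^ 2 / c 0) := by field_simp
    have h5 : 0 ≤ (3 * x + (1 - 3 * x / 2) * c 0) * (y 0 ^ 2 / c 0) := by positivity
    have h6 : 3 * x * (y 0 ^ 2 / c 0) ≤ 3 * x * BX k y y := by gcongr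
    linarith
end
end
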